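/- Let G be a group with identity e and let X ⊆ G be a finite set with e ∉ X. Then X is a statistically free set if and only if X ∪ {e} is a statistically Leinert set. -/

import Mathlib

open Filter

/-- The alternating product `x_1⁻¹ x_2 x_3⁻¹ x_4 ⋯ x_{2n-1}⁻¹ x_{2n}` associated to a
string `(x_1, …, x_{2n})` of group elements. -/
def altProd {G : Type*} [Group G] {n : ℕ} (x : Fin (2 * n) → G) : G :=
  (List.ofFn fun i : Fin n =>
    (x ⟨2 * i.val, by have := i.isLt; omega⟩)⁻¹ *
      x ⟨2 * i.val + 1, by have := i.isLt; omega⟩).prod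

/-- `b_{2n}`: the number of bad valid strings of length `2n` over `X`, i.e. sequences
of elements of `X` with adjacent entries distinct whose alternating product is `1`. -/
noncomputable def badValidCount {G : Type*} [Group G] (X : Finset G) (n : ℕ) : ℕ :=
  Nat.card {f : Fin (2 * n) → G //
    (∀ i, f i ∈ X) ∧
    (∀ (i : ℕ) (h : i + 1 < 2 * n), f ⟨i, by omega⟩ ≠ f ⟨i + 1, h⟩) ∧
    altProd f = 1}

/-- `X` is statistically Leinert if `b_{2n} / (s (s-1)^(2n-1)) → 0` where `s = |X|`. -/
def IsStatLeinert {G : Type*} [Group G] (X : Finset G) : Prop :=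
  Tendsto
    (fun n : ℕ => (badValidCount X n : ℝ) /
      ((X.card : ℝ) * ((X.card : ℝ) - 1) ^ (2 * n - 1)))
    atTop (nhds 0)

/-- The number of bad reduced strings of length `n` over `X`: sequences
`((x_1, ε_1), …, (x_n, ε_n))` with `x_i ∈ X`, `ε_i ∈ {-1, 1}` (modelled as `ℤˣ`), such
that for `1 ≤ i < n` either `x_i ≠ x_{i+1}` or `ε_i = ε_{i+1}`, and
`x_1^{ε_1} ⋯ x_n^{ε_n} = 1`. -/
noncomputable def badReducedCount {G : Type*} [Group G] (X : Finset G) (n : ℕ) : ℕ :=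
  Nat.card {p : Fin n → G × ℤˣ //
    (∀ i, (p i).1 ∈ X) ∧
    (∀ (i : ℕ) (h : i + 1 < n),
      (p ⟨i, by omega⟩).1 ≠ (p ⟨i + 1, h⟩).1 ∨ (p ⟨i, by omega⟩).2 = (p ⟨i + 1, h⟩).2) ∧
    (List.ofFn fun i => (p i).1 ^ (((p i).2 : ℤ))).prod = 1}

/-- `X` is statistically free if `b_n / (2s (2s-1)^(n-1)) → 0` where `s = |X|`. -/
def IsStatFree {G : Type*} [Group G] (X : Finset G) : Prop :=
  Tendsto
    (fun n : ℕ => (badReducedCount X n : ℝ) /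
      (2 * (X.card : ℝ) * (2 * (X.card : ℝ) - 1) ^ (n - 1)))
    atTop (nhds 0)

/-!
Both properties turn out to be equivalent to the infinitude of a subgroup: the one generated by
the set, respectively by the quotients `x⁻¹ y` of its elements. For a set containing `1` these two
subgroups agree, which gives the theorem.

In both cases the bad strings are the words with trivial product in a walk on a finite alphabet of
group elements, closed under inversion, with a biregular adjacency relation. The distributions of
the products of the words of given length, split by first letter, are vectors in `ℓ²(G)` obtained
by iterating an averaging operator twisted by translations. This operator is a contraction, and
the energy lost at each step bounds the difference between the distribution for a letter and the
translate of the one for any successor, so these differences tend to zero. If any two letters have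
a common predecessor, the distributions are therefore asymptotically invariant under the subgroup
`H` generated by the letters; as their total mass is constant, the mass at `1` tends to zero if
and only if `H` is infinite. The only other case is that of an alphabet consisting of one element
and its inverse, where all admissible words are powers of a letter.
-/

open Finset Topology

lemma tendsto_sub_succ_of_antitone {u : ℕ → ℝ} (hu : Antitone u)
    (hbdd : BddBelow (Set.range u)) : Tendsto (fun n ↦ u n - u (n + 1)) atTop (𝓝 0) := by
  have hconv := tendsto_atTop_ciInf hu hbdd
  simpa only [sub_self] using hconv.sub ((tendsto_add_atTop_iff_nat 1).2 hconv)

section Averaging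

variable {ι A E : Type*} [NormedAddCommGroup E] [InnerProductSpace ℝ E]

lemma sum_norm_sub_mean_sq (s : Finset ι) (x : ι → E) :
    ∑ i ∈ s, ‖x i - (#s : ℝ)⁻¹ • ∑ j ∈ s, x j‖ ^ 2 =
      ∑ i ∈ s, ‖x i‖ ^ 2 - #s * ‖(#s : ℝ)⁻¹ • ∑ j ∈ s, x j‖ ^ 2 := by
  rcases s.eq_empty_or_nonempty with rfl | hs
  · simp
  set m := (#s : ℝ)⁻¹ • ∑ j ∈ s, x j with hm
  have hsum : ∑ i ∈ s, x i = (#s : ℝ) • m := by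
    rw [hm, smul_inv_smul₀ (Nat.cast_ne_zero.2 hs.card_pos.ne')]
  have hinner : ∑ i ∈ s, inner ℝ (x i) m = #s * ‖m‖ ^ 2 := by
    rw [← sum_inner, hsum, real_inner_smul_left, real_inner_self_eq_norm_sq]
  simp only [norm_sub_sq_real, sum_add_distrib, sum_sub_distrib, ← mul_sum, hinner, sum_const,
    nsmul_eq_mul]
  ring

variable [Fintype A]

/-- The relation `R` on the finite type `A` is biregular of degree `d` if every element has exactly
`d` successors and exactly `d` predecessors. -/
structure IsBiregular (R : A → A → Prop) [DecidableRel R] (d : ℕ) : Prop where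
  card_successors (a : A) : #{b | R a b} = d
  card_predecessors (b : A) : #{a | R a b} = d

variable (R : A → A → Prop) [DecidableRel R] (U : A → E →ₗᵢ[ℝ] E)

/-- The averaging operator of a relation `R` twisted by isometries: the value at `a` is the mean of
`U a (x b)` over the successors `b` of `a`. -/
noncomputable def successorMean (x : A → E) (a : A) : E :=
  (#{b | R a b} : ℝ)⁻¹ • ∑ b with R a b, U a (x b)

variable {R} {d : ℕ}

lemma IsBiregular.sum_norm_sub_successorMean_sq (hR : IsBiregular R d) (x : A → E) :
    ∑ a, ∑ b with R a b, ‖U a (x b) - successorMean R U x a‖ ^ 2 =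
      d * (∑ a, ‖x a‖ ^ 2 - ∑ a, ‖successorMean R U x a‖ ^ 2) := by
  have hswap : ∑ a, ∑ b with R a b, ‖x b‖ ^ 2 = d * ∑ b, ‖x b‖ ^ 2 := by
    rw [sum_comm' (t' := univ) (s' := fun b ↦ {a | R a b}) (by simp)]
    simp only [sum_const, hR.card_predecessors, nsmul_eq_mul, mul_sum]
  have hmean (a : A) : ∑ b with R a b, ‖U a (x b) - successorMean R U x a‖ ^ 2 =
      ∑ b with R a b, ‖x b‖ ^ 2 - d * ‖successorMean R U x a‖ ^ 2 := by
    simpa only [successorMean, LinearIsometry.norm_map, hR.card_successors] using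
      sum_norm_sub_mean_sq {b | R a b} fun b ↦ U a (x b)
  simp only [hmean, sum_sub_distrib, hswap, mul_sub, mul_sum]

lemma IsBiregular.norm_sub_successorMean_sq_le (hR : IsBiregular R d) (x : A → E) {a b : A}
    (hab : R a b) :
    ‖U a (x b) - successorMean R U x a‖ ^ 2 ≤
      d * (∑ a, ‖x a‖ ^ 2 - ∑ a, ‖successorMean R U x a‖ ^ 2) := by
  rw [← hR.sum_norm_sub_successorMean_sq U x]
  exact (single_le_sum (f := fun b ↦ ‖U a (x b) - successorMean R U x a‖ ^ 2)
      (fun _ _ ↦ sq_nonneg _) (mem_filter.2 ⟨mem_univ b, hab⟩)).trans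
    (single_le_sum (f := fun a ↦ ∑ b with R a b, ‖U a (x b) - successorMean R U x a‖ ^ 2)
      (fun _ _ ↦ sum_nonneg fun _ _ ↦ sq_nonneg _) (mem_univ a))

lemma IsBiregular.tendsto_iterate_successorMean_sub (hR : IsBiregular R d) (x : A → E) {a b : A}
    (hab : R a b) :
    Tendsto (fun n ↦ U a ((successorMean R U)^[n] x b) - (successorMean R U)^[n + 1] x a)
      atTop (𝓝 0) := by
  set y : ℕ → A → E := fun n ↦ (successorMean R U)^[n] x
  have hy (n : ℕ) : y (n + 1) = successorMean R U (y n) := Function.iterate_succ_apply' ..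
  have hd : 0 < d := hR.card_successors a ▸ card_pos.2 ⟨b, mem_filter.2 ⟨mem_univ b, hab⟩⟩
  have hbound (n : ℕ) :
      ‖U a (y n b) - y (n + 1) a‖ ^ 2 ≤ d * (∑ a, ‖y n a‖ ^ 2 - ∑ a, ‖y (n + 1) a‖ ^ 2) :=
    hy n ▸ hR.norm_sub_successorMean_sq_le U (y n) hab
  have hanti : Antitone fun n ↦ ∑ a, ‖y n a‖ ^ 2 := antitone_nat_of_succ_le fun n ↦
    sub_nonneg.1 <| nonneg_of_mul_nonneg_right ((sq_nonneg _).trans (hbound n))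
      (Nat.cast_pos.2 hd)
  have hbdd : BddBelow (Set.range fun n ↦ ∑ a, ‖y n a‖ ^ 2) :=
    ⟨0, Set.forall_mem_range.2 fun n ↦ sum_nonneg fun _ _ ↦ sq_nonneg _⟩
  have hgap := (tendsto_sub_succ_of_antitone hanti hbdd).const_mul (d : ℝ)
  rw [mul_zero] at hgap
  have hsq := (squeeze_zero (fun n ↦ sq_nonneg _) hbound hgap).sqrt
  simp only [Real.sqrt_sq (norm_nonneg _), Real.sqrt_zero] at hsq
  exact tendsto_zero_iff_norm_tendsto_zero.2 hsq

end Averaging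

section Translation

variable {ι ι' 𝕜 : Type*} [RCLike 𝕜]

/-- The isometry of `ℓ²` spaces given by composition with a bijection of the index sets. -/
noncomputable def l2CompEquiv (σ : ι ≃ ι') : lp (fun _ : ι' ↦ 𝕜) 2 →ₗᵢ[𝕜] lp (fun _ : ι ↦ 𝕜) 2 where
  toFun x := ⟨fun i ↦ x (σ i), memℓp_gen <| by
    exact σ.summable_iff.2 ((lp.memℓp x).summable (by simp))⟩
  map_add' _ _ := rfl
  map_smul' _ _ := rfl
  norm_map' x := by
    rw [lp.norm_eq_tsum_rpow (by simp), lp.norm_eq_tsum_rpow (by simp) x,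
      ← σ.tsum_eq fun i ↦ ‖x i‖ ^ (2 : ENNReal).toReal]
    rfl

@[simp] lemma l2CompEquiv_apply (σ : ι ≃ ι') (x : lp (fun _ : ι' ↦ 𝕜) 2) (i : ι) :
    l2CompEquiv σ x i = x (σ i) := rfl

end Translation

section AsymptoticInvariance

lemma tendsto_translate_sub_of_mem_closure {G : Type*} [Group G] {u : ℕ → G → ℝ} {S : Set G}
    (hS : ∀ s ∈ S, ∀ g, Tendsto (fun n ↦ u n (s * g) - u n g) atTop (𝓝 0)) {h : G}
    (hh : h ∈ Subgroup.closure S) (g : G) :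
    Tendsto (fun n ↦ u n (h * g) - u n g) atTop (𝓝 0) := by
  induction hh using Subgroup.closure_induction generalizing g with
  | mem s hs => exact hS s hs g
  | one => simp
  | mul x y _ _ hx hy => simpa [mul_assoc] using (hx (y * g)).add (hy g)
  | inv x _ hx => simpa using (hx (x⁻¹ * g)).neg

variable {ι : Type*} {u : ℕ → ι → ℝ} {C : ℝ} {i₀ : ι}

lemma tendsto_zero_of_tendsto_sub_of_infinite (hC : ∀ n (T : Finset ι), ∑ i ∈ T, u n i ≤ C)
    (hnonneg : ∀ n i, 0 ≤ u n i) {H : Set ι} (hH : H.Infinite)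
    (hsub : ∀ i ∈ H, Tendsto (fun n ↦ u n i - u n i₀) atTop (𝓝 0)) :
    Tendsto (fun n ↦ u n i₀) atTop (𝓝 0) := by
  refine tendsto_order.2 ⟨fun ε hε ↦ .of_forall fun n ↦ hε.trans_le (hnonneg n i₀), fun ε hε ↦ ?_⟩
  obtain ⟨N, hN⟩ := exists_nat_gt ((C + 1) / ε)
  obtain ⟨T, hTH, hTN⟩ := hH.exists_subset_card_eq N
  have hdiff : Tendsto (fun n ↦ ∑ i ∈ T, (u n i - u n i₀)) atTop (𝓝 0) := by
    simpa using tendsto_finsetSum T fun i hi ↦ hsub i (hTH hi)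
  filter_upwards [hdiff.eventually_const_lt neg_one_lt_zero] with n hn
  rw [sum_sub_distrib, sum_const, hTN, nsmul_eq_mul] at hn
  have hNu : N * u n i₀ < N * ε := calc
    N * u n i₀ < C + 1 := by linarith [hC n T]
    _ < N * ε := (div_lt_iff₀ hε).1 hN
  exact lt_of_mul_lt_mul_left hNu N.cast_nonneg

lemma not_tendsto_zero_of_tendsto_sub_of_sum_eq (hC : C ≠ 0) {T : Finset ι}
    (hsum : ∀ n, ∑ i ∈ T, u n i = C)
    (hsub : ∀ i ∈ T, Tendsto (fun n ↦ u n i - u n i₀) atTop (𝓝 0)) :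
    ¬ Tendsto (fun n ↦ u n i₀) atTop (𝓝 0) := by
  intro hzero
  have hT : Tendsto (fun n ↦ ∑ i ∈ T, u n i) atTop (𝓝 0) := by
    simpa using tendsto_finsetSum T fun i hi ↦ (hsub i hi).add hzero
  simp only [hsum] at hT
  exact hC (tendsto_nhds_unique tendsto_const_nhds hT)

end AsymptoticInvariance

section Words

variable {A G : Type*}

/-- A word over `A` is admissible for the relation `R` if each letter is `R`-related to the next. -/
def IsAdmissible (R : A → A → Prop) {n : ℕ} (w : Fin n → A) : Prop :=
  ∀ (i : ℕ) (h : i + 1 < n), R (w ⟨i, by omega⟩) (w ⟨i + 1, h⟩)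

/-- The product in `G` of the labels `φ (w i)` of the letters of a word, in order. -/
def labelProd [Monoid G] (φ : A → G) {n : ℕ} (w : Fin n → A) : G :=
  (List.ofFn fun i ↦ φ (w i)).prod

/-- The number of admissible words of length `n` with trivial label product: the common form of
the counts of bad reduced strings and of bad valid strings. -/
noncomputable def closedWordCount [Monoid G] (R : A → A → Prop) (φ : A → G) (n : ℕ) : ℕ :=
  Nat.card {w : Fin n → A // IsAdmissible R w ∧ labelProd φ w = 1}

lemma isAdmissible_succ_iff {R : A → A → Prop} {n : ℕ} {w : Fin (n + 2) → A} :
    IsAdmissible R w ↔ R (w 0) (w 1) ∧ IsAdmissible R (Fin.tail w) := by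
  refine ⟨fun h ↦ ⟨h 0 (by omega), fun i hi ↦ h (i + 1) (by omega)⟩, fun ⟨h0, htail⟩ i hi ↦ ?_⟩
  cases i with
  | zero => exact h0
  | succ i => exact htail i (by omega)

lemma labelProd_succ [Monoid G] (φ : A → G) {n : ℕ} (w : Fin (n + 1) → A) :
    labelProd φ w = φ (w 0) * labelProd φ (Fin.tail w) := by
  simp only [labelProd, List.ofFn_succ, List.prod_cons, Fin.tail]

lemma labelProd_mem_closure [Group G] (φ : A → G) {n : ℕ} (w : Fin n → A) :
    labelProd φ w ∈ Subgroup.closure (Set.range φ) :=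
  Subgroup.list_prod_mem _ <| List.forall_mem_ofFn_iff.2 fun _ ↦
    Subgroup.subset_closure (Set.mem_range_self _)

open scoped Classical in
/-- The admissible words of length `n + 1` with first letter `a`. -/
noncomputable def admissibleWordsFrom [Fintype A] (R : A → A → Prop) (n : ℕ) (a : A) :
    Finset (Fin (n + 1) → A) :=
  {w | IsAdmissible R w ∧ w 0 = a}

open scoped Classical in
/-- The number of admissible words of length `n + 1` with first letter `a` and label product
`g`. -/
noncomputable def wordCount [Fintype A] [Monoid G] (R : A → A → Prop) (φ : A → G) (n : ℕ) (a : A)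
    (g : G) : ℕ :=
  #{w ∈ admissibleWordsFrom R n a | labelProd φ w = g}

variable [Fintype A] {R : A → A → Prop} {d : ℕ} {n : ℕ} {a : A}

lemma mem_admissibleWordsFrom {w : Fin (n + 1) → A} :
    w ∈ admissibleWordsFrom R n a ↔ IsAdmissible R w ∧ w 0 = a := by
  classical exact mem_filter_univ w

lemma mem_admissibleWordsFrom_succ {w : Fin (n + 2) → A} :
    w ∈ admissibleWordsFrom R (n + 1) a ↔
      w 0 = a ∧ R a (w 1) ∧ Fin.tail w ∈ admissibleWordsFrom R n (w 1) := by
  rw [mem_admissibleWordsFrom, mem_admissibleWordsFrom, isAdmissible_succ_iff]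
  constructor
  · rintro ⟨⟨hR, hw⟩, rfl⟩
    exact ⟨rfl, hR, hw, rfl⟩
  · rintro ⟨rfl, hR, hw, -⟩
    exact ⟨⟨hR, hw⟩, rfl⟩

lemma admissibleWordsFrom_zero (R : A → A → Prop) (a : A) :
    admissibleWordsFrom R 0 a = {fun _ ↦ a} := by
  ext w
  rw [mem_admissibleWordsFrom, mem_singleton, funext_iff, Fin.forall_fin_one]
  exact and_iff_right fun i hi ↦ by omega

section Count

variable [Monoid G] (φ : A → G)

lemma wordCount_zero [DecidableEq G] (R : A → A → Prop) (a : A) (g : G) :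
    wordCount R φ 0 a g = if g = φ a then 1 else 0 := by
  simp only [wordCount, admissibleWordsFrom_zero, filter_singleton, labelProd, List.ofFn_succ,
    List.ofFn_zero, List.prod_singleton, eq_comm (a := g)]
  split_ifs <;> rfl

lemma sum_wordCount_le (T : Finset G) :
    ∑ g ∈ T, wordCount R φ n a g ≤ #(admissibleWordsFrom R n a) := by
  classical exact (sum_card_fiberwise_eq_card_filter ..).trans_le (card_filter_le ..)

lemma closedWordCount_succ : closedWordCount R φ (n + 1) = ∑ a, wordCount R φ n a 1 := by
  classical
  rw [closedWordCount, Nat.card_eq_fintype_card, Fintype.card_subtype,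
    card_eq_sum_card_fiberwise (f := fun w ↦ w 0) (t := univ) fun _ _ ↦ mem_univ _]
  simp only [wordCount, admissibleWordsFrom, filter_filter, and_right_comm]

end Count

lemma sum_wordCount_of_closure_subset [Group G] (φ : A → G) {T : Finset G}
    (hT : (Subgroup.closure (Set.range φ) : Set G) ⊆ T) :
    ∑ g ∈ T, wordCount R φ n a g = #(admissibleWordsFrom R n a) := by
  classical exact (card_eq_sum_card_fiberwise fun w _ ↦ hT (labelProd_mem_closure φ w)).symm

variable [DecidableRel R]

lemma card_filter_tail_admissibleWordsFrom (P : (Fin (n + 1) → A) → Prop) [DecidablePred P] :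
    #{w ∈ admissibleWordsFrom R (n + 1) a | P (Fin.tail w)} =
      ∑ b with R a b, #{w ∈ admissibleWordsFrom R n b | P w} := by
  classical
  rw [card_eq_sum_card_fiberwise (f := fun w ↦ w 1) (t := {b | R a b}) fun w hw ↦
    mem_filter.2 ⟨mem_univ _, (mem_admissibleWordsFrom_succ.1 (mem_filter.1 hw).1).2.1⟩]
  refine sum_congr rfl fun b hb ↦ ?_
  refine card_bij' (fun w _ ↦ Fin.tail w) (fun w _ ↦ Fin.cons (α := fun _ ↦ A) a w)
    (fun w hw ↦ ?_) (fun w hw ↦ ?_) (fun w hw ↦ ?_) fun w _ ↦ Fin.tail_cons (α := fun _ ↦ A) a w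
  · simp only [mem_filter] at hw ⊢
    obtain ⟨⟨hw, hP⟩, rfl⟩ := hw
    exact ⟨(mem_admissibleWordsFrom_succ.1 hw).2.2, hP⟩
  · simp only [mem_filter, Fin.tail_cons] at hw ⊢
    obtain ⟨hw, hP⟩ := hw
    obtain rfl : w 0 = b := (mem_admissibleWordsFrom.1 hw).2
    exact ⟨⟨mem_admissibleWordsFrom_succ.2 ⟨rfl, (mem_filter.1 hb).2, hw⟩, hP⟩, rfl⟩
  · simp only [mem_filter] at hw
    rw [← (mem_admissibleWordsFrom_succ.1 hw.1.1).1, Fin.cons_self_tail]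

lemma card_admissibleWordsFrom (hR : ∀ a, #{b | R a b} = d) (n : ℕ) (a : A) :
    #(admissibleWordsFrom R n a) = d ^ n := by
  induction n generalizing a with
  | zero =>
    rw [admissibleWordsFrom_zero, card_singleton, pow_zero]
  | succ n ih =>
    have h := card_filter_tail_admissibleWordsFrom (R := R) (n := n) (a := a) fun _ ↦ True
    simpa only [filter_true, ih, sum_const, hR, smul_eq_mul, ← pow_succ'] using h

lemma wordCount_succ [Group G] (φ : A → G) (n : ℕ) (a : A) (g : G) :
    wordCount R φ (n + 1) a g = ∑ b with R a b, wordCount R φ n b ((φ a)⁻¹ * g) := by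
  classical
  simp only [wordCount, ← card_filter_tail_admissibleWordsFrom]
  refine congrArg card (filter_congr fun w hw ↦ ?_)
  rw [labelProd_succ, (mem_admissibleWordsFrom.1 hw).2, eq_inv_mul_iff_mul_eq]

end Words

section Density

variable {A G : Type*} [Fintype A] [Monoid G]

/-- The proportion of the `d ^ n` admissible words of length `n + 1` with first letter `a` whose
label product is `g`. -/
noncomputable def wordDensity (R : A → A → Prop) (φ : A → G) (d n : ℕ) (a : A) (g : G) : ℝ :=
  wordCount R φ n a g / d ^ n

/-- The sum of the word densities over all first letters: a measure on `G` of total mass `|A|`. -/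
noncomputable def labelDensity (R : A → A → Prop) (φ : A → G) (d n : ℕ) (g : G) : ℝ :=
  ∑ a, wordDensity R φ d n a g

/-- The proportion of the admissible words of length `n` that have trivial label product, for a
relation of degree `d`. -/
noncomputable def closedWordFraction (R : A → A → Prop) (φ : A → G) (d n : ℕ) : ℝ :=
  closedWordCount R φ n / (Fintype.card A * d ^ (n - 1))

variable {R : A → A → Prop} {φ : A → G} {d : ℕ}

lemma labelDensity_nonneg (n : ℕ) (g : G) : 0 ≤ labelDensity R φ d n g :=
  sum_nonneg fun _ _ ↦ by unfold wordDensity; positivity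

lemma closedWordFraction_succ (n : ℕ) :
    closedWordFraction R φ d (n + 1) = labelDensity R φ d n 1 / Fintype.card A := by
  simp only [closedWordFraction, closedWordCount_succ, labelDensity, wordDensity, ← sum_div,
    Nat.cast_sum, Nat.add_sub_cancel, div_div, mul_comm]

lemma tendsto_closedWordFraction_iff [Nonempty A] :
    Tendsto (closedWordFraction R φ d) atTop (𝓝 0) ↔
      Tendsto (fun n ↦ labelDensity R φ d n 1) atTop (𝓝 0) := by
  have hA : (Fintype.card A : ℝ) ≠ 0 := Nat.cast_ne_zero.2 Fintype.card_ne_zero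
  rw [← tendsto_add_atTop_iff_nat 1]
  simp only [closedWordFraction_succ]
  refine ⟨fun h ↦ ?_, fun h ↦ by simpa using h.div_const (Fintype.card A : ℝ)⟩
  simpa [div_mul_cancel₀ _ hA] using h.mul_const (Fintype.card A : ℝ)

lemma sum_labelDensity_le [DecidableRel R] (hR : IsBiregular R d) (n : ℕ) (T : Finset G) :
    ∑ g ∈ T, labelDensity R φ d n g ≤ Fintype.card A := by
  simp only [labelDensity]
  rw [sum_comm]
  refine (sum_le_card_nsmul univ _ 1 fun a _ ↦ ?_).trans_eq (nsmul_one _)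
  simp only [wordDensity]
  rw [← sum_div]
  refine div_le_one_of_le₀ ?_ (by positivity)
  exact_mod_cast (sum_wordCount_le φ T).trans_eq (card_admissibleWordsFrom hR.card_successors n a)

end Density

section EdgeDensity

variable {A G : Type*} [Fintype A] [Group G] {R : A → A → Prop} [DecidableRel R] {φ : A → G}
  {d : ℕ}

lemma sum_labelDensity_of_closure_subset (hR : IsBiregular R d) (hd : d ≠ 0) (n : ℕ)
    {T : Finset G} (hT : (Subgroup.closure (Set.range φ) : Set G) ⊆ T) :
    ∑ g ∈ T, labelDensity R φ d n g = Fintype.card A := by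
  have hmass (a : A) : ∑ g ∈ T, wordDensity R φ d n a g = 1 := by
    simp only [wordDensity]
    rw [← sum_div, ← Nat.cast_sum, sum_wordCount_of_closure_subset φ hT,
      card_admissibleWordsFrom hR.card_successors, Nat.cast_pow,
      div_self (pow_ne_zero n (Nat.cast_ne_zero.2 hd))]
  simp only [labelDensity]
  rw [sum_comm]
  simp only [hmass, sum_const, card_univ, nsmul_one]

lemma iterate_successorMean_single_apply [DecidableEq G] (hR : IsBiregular R d) (n : ℕ) (a : A)
    (g : G) :
    (successorMean R fun a ↦ l2CompEquiv (𝕜 := ℝ) (Equiv.mulLeft (φ a)⁻¹))^[n]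
      (fun a ↦ lp.single 2 (φ a) 1) a g = wordDensity R φ d n a g := by
  induction n generalizing a g with
  | zero => simp [wordDensity, wordCount_zero, Pi.single_apply]
  | succ n ih =>
    simp only [Function.iterate_succ_apply', successorMean, lp.coeFn_smul, lp.coeFn_sum,
      Pi.smul_apply, Finset.sum_apply, l2CompEquiv_apply, Equiv.coe_mulLeft, ih, smul_eq_mul,
      hR.card_successors, wordDensity, wordCount_succ, Nat.cast_sum, ← sum_div, pow_succ]
    rw [← div_eq_inv_mul, div_div]

variable (φ) in
lemma tendsto_wordDensity_sub_succ (hR : IsBiregular R d) {a b : A} (hab : R a b) (g : G) :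
    Tendsto (fun n ↦ wordDensity R φ d n b g - wordDensity R φ d (n + 1) a (φ a * g))
      atTop (𝓝 0) := by
  classical
  have hlim := hR.tendsto_iterate_successorMean_sub
    (fun a ↦ l2CompEquiv (𝕜 := ℝ) (Equiv.mulLeft (φ a)⁻¹)) (fun a ↦ lp.single 2 (φ a) 1) hab
  refine squeeze_zero_norm (fun n ↦ ?_) (tendsto_zero_iff_norm_tendsto_zero.1 hlim)
  refine le_of_eq_of_le ?_ (lp.norm_apply_le_norm two_ne_zero _ (φ a * g))
  simp only [lp.coeFn_sub, Pi.sub_apply, l2CompEquiv_apply, Equiv.coe_mulLeft,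
    inv_mul_cancel_left, iterate_successorMean_single_apply hR]

end EdgeDensity

section Mixing

variable {A G : Type*} [Fintype A] [Group G] {R : A → A → Prop} [DecidableRel R] {d : ℕ}
  (φ : A → G) (hR : IsBiregular R d) (hmix : ∀ b b', ∃ a, R a b ∧ R a b')

include hR hmix

lemma tendsto_wordDensity_sub (b b' : A) (g : G) :
    Tendsto (fun n ↦ wordDensity R φ d n b g - wordDensity R φ d n b' g) atTop (𝓝 0) := by
  obtain ⟨a, hb, hb'⟩ := hmix b b'
  simpa using
    (tendsto_wordDensity_sub_succ φ hR hb g).sub (tendsto_wordDensity_sub_succ φ hR hb' g)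

lemma tendsto_labelDensity_sub_card_mul (b : A) (g : G) :
    Tendsto (fun n ↦ labelDensity R φ d n g - Fintype.card A * wordDensity R φ d n b g)
      atTop (𝓝 0) := by
  simpa [labelDensity, sum_sub_distrib] using
    tendsto_finsetSum univ fun a _ ↦ tendsto_wordDensity_sub φ hR hmix a b g

lemma degree_ne_zero_of_mixing [Nonempty A] : d ≠ 0 := by
  obtain ⟨b⟩ := ‹Nonempty A›
  obtain ⟨a, hab, -⟩ := hmix b b
  rw [← hR.card_successors a]
  exact card_ne_zero_of_mem (mem_filter.2 ⟨mem_univ b, hab⟩)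

lemma tendsto_labelDensity_sub_succ (a : A) (g : G) :
    Tendsto (fun n ↦ labelDensity R φ d n g - labelDensity R φ d (n + 1) (φ a * g))
      atTop (𝓝 0) := by
  have : Nonempty A := ⟨a⟩
  obtain ⟨b, hb⟩ := card_ne_zero.1 ((hR.card_successors a).trans_ne
    (degree_ne_zero_of_mixing hR hmix))
  have hedge := (tendsto_wordDensity_sub_succ φ hR (mem_filter.1 hb).2 g).const_mul
    (Fintype.card A : ℝ)
  have hb := tendsto_labelDensity_sub_card_mul φ hR hmix b g
  have ha := (tendsto_add_atTop_iff_nat 1).2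
    (tendsto_labelDensity_sub_card_mul φ hR hmix a (φ a * g))
  have h := (hb.add hedge).sub ha
  rw [mul_zero, add_zero, sub_zero] at h
  exact h.congr fun n ↦ by ring

variable {φ} (hinv : ∀ a, ∃ a', φ a' = (φ a)⁻¹)

include hinv

lemma tendsto_labelDensity_sub_add_two (a : A) (g : G) :
    Tendsto (fun n ↦ labelDensity R φ d n g - labelDensity R φ d (n + 2) g) atTop (𝓝 0) := by
  obtain ⟨a', ha'⟩ := hinv a
  have h := (tendsto_labelDensity_sub_succ φ hR hmix a g).add
    ((tendsto_add_atTop_iff_nat 1).2 (tendsto_labelDensity_sub_succ φ hR hmix a' (φ a * g)))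
  simpa only [ha', inv_mul_cancel_left, sub_add_sub_cancel, add_zero] using h

-- Left translation by a label shifts the length by one, so only the sum over two consecutive
-- lengths is asymptotically invariant: the densities may be concentrated on cosets of a subgroup
-- of index two, alternating with the length.
lemma tendsto_labelDensity_add_succ_translate_sub (a : A) (g : G) :
    Tendsto (fun n ↦ labelDensity R φ d n (φ a * g) + labelDensity R φ d (n + 1) (φ a * g) -
      (labelDensity R φ d n g + labelDensity R φ d (n + 1) g)) atTop (𝓝 0) := by
  have hshift := tendsto_labelDensity_sub_succ φ hR hmix a g
  have htwo := tendsto_labelDensity_sub_add_two hR hmix hinv a (φ a * g)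
  have h := (htwo.sub hshift).sub ((tendsto_add_atTop_iff_nat 1).2 hshift)
  simp only [sub_zero] at h
  exact h.congr fun n ↦ by ring

theorem tendsto_closedWordFraction_iff_infinite_of_mixing [Nonempty A] :
    Tendsto (closedWordFraction R φ d) atTop (𝓝 0) ↔
      Infinite (Subgroup.closure (Set.range φ)) := by
  set p := labelDensity R φ d
  set u : ℕ → G → ℝ := fun n g ↦ p n g + p (n + 1) g
  have hu (h : G) (hh : h ∈ Subgroup.closure (Set.range φ)) :
      Tendsto (fun n ↦ u n h - u n 1) atTop (𝓝 0) := by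
    have htr := tendsto_translate_sub_of_mem_closure (u := u) (S := Set.range φ)
      (Set.forall_mem_range.2 (tendsto_labelDensity_add_succ_translate_sub hR hmix hinv)) hh 1
    rwa [mul_one] at htr
  have hpu : Tendsto (fun n ↦ p n 1) atTop (𝓝 0) ↔ Tendsto (fun n ↦ u n 1) atTop (𝓝 0) := by
    refine ⟨fun h ↦ by simpa using h.add ((tendsto_add_atTop_iff_nat 1).2 h), fun h ↦ ?_⟩
    exact squeeze_zero (fun n ↦ labelDensity_nonneg n 1)
      (fun n ↦ le_add_of_nonneg_right (labelDensity_nonneg (n + 1) 1)) h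
  rw [tendsto_closedWordFraction_iff, hpu]
  refine ⟨fun hzero ↦ not_finite_iff_infinite.1 fun hfin ↦ ?_, fun hinf ↦ ?_⟩
  · have hfin : (Subgroup.closure (Set.range φ) : Set G).Finite := Set.toFinite _
    have hsum (n : ℕ) : ∑ g ∈ hfin.toFinset, p n g = Fintype.card A :=
      sum_labelDensity_of_closure_subset hR (degree_ne_zero_of_mixing hR hmix) n
        hfin.coe_toFinset.superset
    refine not_tendsto_zero_of_tendsto_sub_of_sum_eq (C := Fintype.card A + Fintype.card A)
      (by positivity) (T := hfin.toFinset) (fun n ↦ ?_)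
      (fun h hh ↦ hu h (hfin.mem_toFinset.1 hh)) hzero
    rw [sum_add_distrib, hsum, hsum]
  · refine tendsto_zero_of_tendsto_sub_of_infinite (C := Fintype.card A + Fintype.card A)
      (fun n T ↦ ?_) (fun n g ↦ add_nonneg (labelDensity_nonneg n g)
        (labelDensity_nonneg (n + 1) g)) (Set.infinite_coe_iff.1 hinf) hu
    rw [sum_add_distrib]
    exact add_le_add (sum_labelDensity_le hR n T) (sum_labelDensity_le hR (n + 1) T)

end Mixing

section Constant

variable {A G : Type*} [Fintype A] [Group G] (φ : A → G)

lemma wordCount_eq [DecidableEq G] (n : ℕ) (a : A) (g : G) :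
    wordCount Eq φ n a g = if g = φ a ^ (n + 1) then 1 else 0 := by
  classical
  induction n generalizing g with
  | zero => rw [wordCount_zero, zero_add, pow_one]
  | succ n ih =>
    simp only [wordCount_succ, sum_filter, sum_ite_eq, mem_univ, if_true, ih,
      inv_mul_eq_iff_eq_mul, ← pow_succ']

lemma closedWordCount_eq [DecidableEq G] (n : ℕ) :
    closedWordCount Eq φ (n + 1) = #{a | φ a ^ (n + 1) = 1} := by
  simp only [closedWordCount_succ, wordCount_eq, card_filter, eq_comm (a := (1 : G))]

variable {φ}

theorem tendsto_closedWordFraction_eq_iff_infinite [Nonempty A]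
    (hgen : ∀ a b, φ b ∈ Subgroup.zpowers (φ a)) :
    Tendsto (closedWordFraction Eq φ 1) atTop (𝓝 0) ↔
      Infinite (Subgroup.closure (Set.range φ)) := by
  classical
  set H := Subgroup.closure (Set.range φ)
  refine ⟨fun hzero ↦ not_finite_iff_infinite.1 fun hfin ↦ ?_, fun hinf ↦ ?_⟩
  · have hpow (a : A) : φ a ^ Nat.card H = 1 := congrArg Subtype.val
      (pow_card_eq_one' (x := (⟨φ a, Subgroup.subset_closure (Set.mem_range_self a)⟩ : H)))
    have hone (n : ℕ) : closedWordFraction Eq φ 1 (Nat.card H * (n + 1)) = 1 := by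
      obtain ⟨m, hm⟩ := Nat.exists_eq_succ_of_ne_zero
        (mul_ne_zero (Nat.card_pos (α := H)).ne' n.succ_ne_zero)
      have hall (a : A) : φ a ^ (m + 1) = 1 := by
        rw [← Nat.succ_eq_add_one, ← hm, pow_mul, hpow, one_pow]
      rw [closedWordFraction, hm, closedWordCount_eq, filter_true_of_mem fun a _ ↦ hall a]
      simp
    have hsub : Tendsto (fun n ↦ Nat.card H * (n + 1)) atTop atTop := tendsto_atTop_mono
      (fun n ↦ n.le_succ.trans (Nat.le_mul_of_pos_left _ Nat.card_pos)) tendsto_id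
    have hzero_one : Tendsto (fun _ : ℕ ↦ (1 : ℝ)) atTop (𝓝 0) := (hzero.comp hsub).congr hone
    exact one_ne_zero (tendsto_nhds_unique tendsto_const_nhds hzero_one)
  · have hpow (n : ℕ) (a : A) : φ a ^ (n + 1) ≠ 1 := fun h ↦ by
      have hle : H ≤ Subgroup.zpowers (φ a) :=
        (Subgroup.closure_le _).2 (Set.range_subset_iff.2 (hgen a))
      have : Finite (Subgroup.zpowers (φ a)) :=
        finite_zpowers.2 (isOfFinOrder_iff_pow_eq_one.2 ⟨n + 1, n.succ_pos, h⟩)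
      exact not_finite_iff_infinite.2 hinf (Finite.Set.subset _ hle)
    refine (tendsto_add_atTop_iff_nat 1).1 (tendsto_const_nhds.congr fun n ↦ ?_)
    rw [closedWordFraction, closedWordCount_eq, filter_false_of_mem fun a _ ↦ hpow n a, card_empty,
      Nat.cast_zero, zero_div]

end Constant

section TwoLetters

variable {A G : Type*} [Fintype A] [Group G] {R : A → A → Prop} {φ : A → G} {inv : A → A}

lemma IsBiregular.eq_of_reflexive [DecidableRel R] (hR : IsBiregular R 1) (hrefl : ∀ a, R a a) :
    R = Eq := by
  ext a b
  refine ⟨fun hab ↦ ?_, fun hab ↦ hab ▸ hrefl a⟩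
  exact card_le_one.1 (hR.card_successors a).le a (mem_filter.2 ⟨mem_univ a, hrefl a⟩) b
    (mem_filter.2 ⟨mem_univ b, hab⟩)

lemma mem_zpowers_of_card_eq_two (hA : Fintype.card A = 2) (hne : ∀ a, inv a ≠ a)
    (hφ : ∀ a, φ (inv a) = (φ a)⁻¹) (a b : A) : φ b ∈ Subgroup.zpowers (φ a) := by
  classical
  have huniv : ({a, inv a} : Finset A) = univ :=
    eq_univ_of_card _ ((card_pair (hne a).symm).trans hA.symm)
  have hb : b ∈ ({a, inv a} : Finset A) := huniv ▸ mem_univ b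
  rcases mem_insert.1 hb with rfl | hb
  · exact Subgroup.mem_zpowers _
  · rw [mem_singleton.1 hb, hφ]
    exact inv_mem (Subgroup.mem_zpowers _)

lemma isBiregular_of_involutive [DecidableRel R] {d : ℕ} (hinv : Function.Involutive inv)
    (hR : ∀ a b, R (inv b) (inv a) ↔ R a b) (hcard : ∀ a, #{b | R a b} = d) :
    IsBiregular R d where
  card_successors := hcard
  card_predecessors b := by
    rw [← hcard (inv b)]
    exact card_equiv (hinv.toPerm inv) fun a ↦ by simp [hR]

end TwoLetters

section ReducedStrings

variable {α : Type*}

/-- Adjacency in reduced strings: a letter `(x, ε)`, standing for `x ^ ε`, may be followed by any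
letter other than its formal inverse. -/
def ReducedAdj (a b : α × ℤˣ) : Prop :=
  a.1 ≠ b.1 ∨ a.2 = b.2

instance [DecidableEq α] : DecidableRel (ReducedAdj (α := α)) :=
  fun _ _ ↦ inferInstanceAs (Decidable (_ ∨ _))

/-- The formal inverse of the letter `(x, ε)`. -/
def letterInv (a : α × ℤˣ) : α × ℤˣ :=
  (a.1, -a.2)

lemma letterInv_involutive : Function.Involutive (letterInv (α := α)) :=
  fun a ↦ by simp [letterInv]

lemma letterInv_ne_self (a : α × ℤˣ) : letterInv a ≠ a :=
  fun h ↦ units_ne_neg_self a.2 (congrArg Prod.snd h).symm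

lemma reducedAdj_iff_ne_letterInv {a b : α × ℤˣ} : ReducedAdj a b ↔ b ≠ letterInv a := by
  rw [ReducedAdj, letterInv, Ne, Ne, Prod.ext_iff, not_and_or, ← Int.units_ne_iff_eq_neg, not_not,
    eq_comm (a := a.1), eq_comm (a := a.2)]

lemma reducedAdj_comm {a b : α × ℤˣ} : ReducedAdj a b ↔ ReducedAdj b a := by
  simp only [ReducedAdj, ne_comm, eq_comm]

lemma reducedAdj_letterInv {a b : α × ℤˣ} :
    ReducedAdj (letterInv b) (letterInv a) ↔ ReducedAdj a b := by
  simp only [ReducedAdj, letterInv, neg_inj, ne_comm, eq_comm]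

lemma reducedAdj_mixing [Fintype α] (hα : 2 ≤ Fintype.card α) (b b' : α × ℤˣ) :
    ∃ a, ReducedAdj a b ∧ ReducedAdj a b' := by
  have hcard : 3 ≤ ENat.card (α × ℤˣ) := by
    rw [ENat.card_eq_coe_fintype_card, Fintype.card_prod, Fintype.card_units_int]
    exact_mod_cast (by omega : 3 ≤ Fintype.card α * 2)
  obtain ⟨c, hb, hb'⟩ := ENat.exists_ne_ne_of_three_le hcard (letterInv b) (letterInv b')
  simp only [← reducedAdj_iff_ne_letterInv, reducedAdj_comm (b := c)] at hb hb'
  exact ⟨c, hb, hb'⟩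

lemma isBiregular_reducedAdj [Fintype α] [DecidableEq α] :
    IsBiregular (ReducedAdj (α := α)) (2 * Fintype.card α - 1) := by
  refine isBiregular_of_involutive letterInv_involutive (fun a b ↦ reducedAdj_letterInv) fun a ↦ ?_
  simp only [reducedAdj_iff_ne_letterInv, filter_ne', card_erase_of_mem (mem_univ _), card_univ,
    Fintype.card_prod, Fintype.card_units_int, mul_comm]

variable {G : Type*} [Group G]

/-- The group element `x ^ ε` denoted by the letter `(x, ε)`. -/
def letterValue {X : Finset G} (a : X × ℤˣ) : G :=
  (a.1 : G) ^ (a.2 : ℤ)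

lemma letterValue_letterInv {X : Finset G} (a : X × ℤˣ) :
    letterValue (letterInv a) = (letterValue a)⁻¹ := by
  simp [letterValue, letterInv]

lemma closure_range_letterValue (X : Finset G) :
    Subgroup.closure (Set.range (letterValue (X := X))) = Subgroup.closure X := by
  refine le_antisymm ((Subgroup.closure_le _).2 ?_) (Subgroup.closure_mono fun x hx ↦ ?_)
  · rintro _ ⟨a, rfl⟩
    exact zpow_mem (Subgroup.subset_closure a.1.2) _
  · exact ⟨(⟨x, hx⟩, 1), by simp [letterValue]⟩

lemma badReducedCount_eq_closedWordCount (X : Finset G) (n : ℕ) :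
    badReducedCount X n = closedWordCount ReducedAdj (letterValue (X := X)) n :=
  Nat.card_congr
    { toFun p := ⟨fun i ↦ (⟨(p.1 i).1, p.2.1 i⟩, (p.1 i).2),
        fun i hi ↦ (p.2.2.1 i hi).imp_left (Subtype.coe_ne_coe.1), p.2.2.2⟩
      invFun w := ⟨fun i ↦ ((w.1 i).1, (w.1 i).2), fun i ↦ (w.1 i).1.2,
        fun i hi ↦ (w.2.1 i hi).imp_left (Subtype.coe_ne_coe.2), w.2.2⟩
      left_inv _ := rfl
      right_inv _ := rfl }

lemma isStatFree_iff_tendsto_closedWordFraction {X : Finset G} (hX : X.Nonempty) :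
    IsStatFree X ↔
      Tendsto (closedWordFraction ReducedAdj (letterValue (X := X)) (2 * #X - 1)) atTop (𝓝 0) := by
  have hpos := hX.card_pos
  refine tendsto_congr fun n ↦ ?_
  rw [closedWordFraction, badReducedCount_eq_closedWordCount, Fintype.card_prod,
    Fintype.card_units_int, Fintype.card_coe, Nat.cast_sub (by omega)]
  push_cast
  rw [mul_comm (2 : ℝ)]

theorem isStatFree_iff_infinite_closure {X : Finset G} (hX : X.Nonempty) :
    IsStatFree X ↔ Infinite (Subgroup.closure (X : Set G)) := by
  classical
  have := hX.to_subtype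
  have hR := isBiregular_reducedAdj (α := X)
  rw [isStatFree_iff_tendsto_closedWordFraction hX, ← closure_range_letterValue]
  rw [Fintype.card_coe] at hR
  obtain hone | htwo := Nat.eq_or_lt_of_le hX.card_pos
  · rw [← hone] at hR ⊢
    rw [hR.eq_of_reflexive fun a ↦ .inr rfl]
    refine tendsto_closedWordFraction_eq_iff_infinite
      (mem_zpowers_of_card_eq_two ?_ letterInv_ne_self letterValue_letterInv)
    simp [← hone]
  · exact tendsto_closedWordFraction_iff_infinite_of_mixing hR
      (reducedAdj_mixing (htwo.trans_eq (Fintype.card_coe X).symm))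
      fun a ↦ ⟨letterInv a, letterValue_letterInv a⟩

end ReducedStrings

section ValidStrings

open scoped Pointwise

/-- The string of length `2 n` listing the entries of `n` pairs in order; valid strings are
recovered in this way from words over an alphabet of pairs. -/
def interleave {α : Type*} {n : ℕ} (w : Fin n → α × α) (j : Fin (2 * n)) : α :=
  if j.1 % 2 = 0 then (w ⟨j.1 / 2, by omega⟩).1 else (w ⟨j.1 / 2, by omega⟩).2

section Interleave

variable {α : Type*} {n : ℕ} (w : Fin n → α × α) (i : Fin n)

lemma interleave_two_mul : interleave w ⟨2 * i, by omega⟩ = (w i).1 := by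
  simp [interleave]

lemma interleave_two_mul_add_one : interleave w ⟨2 * i + 1, by omega⟩ = (w i).2 := by
  simp [interleave, Nat.mul_add_div]

lemma forall_fin_two_mul {P : Fin (2 * n) → Prop} :
    (∀ j, P j) ↔ ∀ i : Fin n, P ⟨2 * i, by omega⟩ ∧ P ⟨2 * i + 1, by omega⟩ := by
  refine ⟨fun h i ↦ ⟨h _, h _⟩, fun h ⟨j, hj⟩ ↦ ?_⟩
  obtain ⟨k, rfl | rfl⟩ := Nat.even_or_odd' j
  · exact (h ⟨k, by omega⟩).1
  · exact (h ⟨k, by omega⟩).2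

end Interleave

variable {α : Type*}

/-- The alphabet for valid strings: the pairs `(x, y)` of distinct entries, standing for the factor
`x⁻¹ y` of the alternating product. -/
abbrev OffDiagPair (α : Type*) : Type _ := {p : α × α // p.1 ≠ p.2}

/-- Adjacency of consecutive pairs in a valid string. -/
def ValidAdj (p q : OffDiagPair α) : Prop :=
  p.1.2 ≠ q.1.1

instance [DecidableEq α] : DecidableRel (ValidAdj (α := α)) :=
  fun _ _ ↦ inferInstanceAs (Decidable (_ ≠ _))

/-- The pair `(y, x)`, whose factor `y⁻¹ x` is the inverse of that of `(x, y)`. -/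
def pairSwap (p : OffDiagPair α) : OffDiagPair α :=
  ⟨p.1.swap, p.2.symm⟩

lemma pairSwap_involutive : Function.Involutive (pairSwap (α := α)) :=
  fun _ ↦ rfl

lemma pairSwap_ne_self (p : OffDiagPair α) : pairSwap p ≠ p :=
  fun h ↦ p.2 (congrArg (fun q ↦ q.1.2) h)

lemma validAdj_mixing (hα : 3 ≤ ENat.card α) (q q' : OffDiagPair α) :
    ∃ p, ValidAdj p q ∧ ValidAdj p q' := by
  obtain ⟨y, hq, hq'⟩ := ENat.exists_ne_ne_of_three_le hα q.1.1 q'.1.1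
  obtain ⟨x, hx, -⟩ := ENat.exists_ne_ne_of_three_le hα y y
  exact ⟨⟨(x, y), hx⟩, hq, hq'⟩

lemma IsAdmissible.interleave_ne_succ {n : ℕ} {w : Fin n → OffDiagPair α}
    (hw : IsAdmissible ValidAdj w) (j : ℕ) (hj : j + 1 < 2 * n) :
    interleave (fun i ↦ (w i).1) ⟨j, by omega⟩ ≠ interleave (fun i ↦ (w i).1) ⟨j + 1, hj⟩ := by
  obtain ⟨k, rfl | rfl⟩ := Nat.even_or_odd' j
  · rw [interleave_two_mul _ ⟨k, by omega⟩, interleave_two_mul_add_one _ ⟨k, by omega⟩]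
    exact (w _).2
  · rw [interleave_two_mul_add_one _ ⟨k, by omega⟩]
    exact (hw k (by omega)).trans_eq (interleave_two_mul (fun i ↦ (w i).1) ⟨k + 1, by omega⟩).symm

section Degree

variable [Fintype α] [DecidableEq α]

lemma card_filter_offDiagPair_fst_mem (s : Finset α) :
    #{p : OffDiagPair α | p.1.1 ∈ s} = #s * (Fintype.card α - 1) := by
  have hbij : #{p : OffDiagPair α | p.1.1 ∈ s} = #(s.sigma fun x ↦ univ.erase x) :=
    card_bij (fun p _ ↦ ⟨p.1.1, p.1.2⟩) (fun p hp ↦ by simpa [p.2.symm] using hp)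
      (fun p _ q _ h ↦ by simpa [Subtype.ext_iff, Prod.ext_iff] using h)
      fun ⟨x, y⟩ h ↦ by
        obtain ⟨hx, hy⟩ := mem_sigma.1 h
        exact ⟨⟨(x, y), (ne_of_mem_erase hy).symm⟩, mem_filter.2 ⟨mem_univ _, hx⟩, rfl⟩
  simp [hbij, card_erase_of_mem]

lemma card_offDiagPair : Fintype.card (OffDiagPair α) = Fintype.card α * (Fintype.card α - 1) := by
  simpa only [mem_univ, filter_true, card_univ] using
    card_filter_offDiagPair_fst_mem (univ : Finset α)

lemma isBiregular_validAdj :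
    IsBiregular (ValidAdj (α := α)) ((Fintype.card α - 1) ^ 2) := by
  refine isBiregular_of_involutive pairSwap_involutive (fun _ _ ↦ ne_comm) fun p ↦ ?_
  have h := card_filter_offDiagPair_fst_mem (univ.erase p.1.2)
  rw [card_erase_of_mem (mem_univ _), card_univ, ← sq] at h
  simpa only [ValidAdj, mem_erase, mem_univ, and_true, ne_comm] using h

end Degree

variable {G : Type*} [Group G]

/-- The factor `x⁻¹ y` of the alternating product given by the pair `(x, y)`. -/
def pairValue {Y : Finset G} (p : OffDiagPair Y) : G :=
  (p.1.1 : G)⁻¹ * p.1.2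

lemma pairValue_pairSwap {Y : Finset G} (p : OffDiagPair Y) :
    pairValue (pairSwap p) = (pairValue p)⁻¹ := by
  simp [pairValue, pairSwap]

lemma closure_range_pairValue (Y : Finset G) :
    Subgroup.closure (Set.range (pairValue (Y := Y))) =
      Subgroup.closure ((Y : Set G)⁻¹ * (Y : Set G)) := by
  refine le_antisymm (Subgroup.closure_mono ?_) ((Subgroup.closure_le _).2 ?_)
  · rintro _ ⟨p, rfl⟩
    exact Set.mul_mem_mul (Set.inv_mem_inv.2 p.1.1.2) p.1.2.2
  · rintro _ ⟨x, hx, y, hy, rfl⟩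
    obtain hxy | hxy := eq_or_ne x⁻¹ y
    · simp [← hxy]
    · exact Subgroup.subset_closure
        ⟨⟨(⟨x⁻¹, hx⟩, ⟨y, hy⟩), Subtype.coe_ne_coe.1 hxy⟩, by simp [pairValue]⟩

lemma closure_inv_mul_of_one_mem {S : Set G} (h1 : 1 ∈ S) :
    Subgroup.closure (S⁻¹ * S) = Subgroup.closure S := by
  refine le_antisymm ((Subgroup.closure_le _).2 ?_) (Subgroup.closure_mono fun x hx ↦ ?_)
  · rintro _ ⟨x, hx, y, hy, rfl⟩
    exact mul_mem (inv_mem_iff.1 (Subgroup.subset_closure hx)) (Subgroup.subset_closure hy)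
  · exact ⟨1, by simpa using h1, x, hx, one_mul x⟩

lemma badValidCount_eq_closedWordCount (Y : Finset G) (n : ℕ) :
    badValidCount Y n = closedWordCount ValidAdj (pairValue (Y := Y)) n :=
  Nat.card_congr
    { toFun f := ⟨fun i ↦ ⟨(⟨f.1 ⟨2 * i, by omega⟩, f.2.1 _⟩, ⟨f.1 ⟨2 * i + 1, by omega⟩, f.2.1 _⟩),
          Subtype.coe_ne_coe.1 (f.2.2.1 (2 * i) (by omega))⟩,
        fun i hi ↦ Subtype.coe_ne_coe.1 (f.2.2.1 (2 * i + 1) (by omega)), f.2.2.2⟩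
      invFun w := ⟨fun j ↦ (interleave (fun i ↦ (w.1 i).1) j : Y), fun j ↦ Subtype.coe_prop _,
        fun j hj ↦ Subtype.coe_ne_coe.2 (w.2.1.interleave_ne_succ j hj), by
          simpa only [altProd, interleave_two_mul, interleave_two_mul_add_one, labelProd,
            pairValue] using w.2.2⟩
      left_inv f := by
        refine Subtype.ext (funext (forall_fin_two_mul.2 fun i ↦ ⟨?_, ?_⟩))
        · simp only [interleave_two_mul]
        · simp only [interleave_two_mul_add_one]
      right_inv w := by
        refine Subtype.ext (funext fun i ↦ Subtype.ext (Prod.ext ?_ ?_))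
        · exact interleave_two_mul (fun i ↦ (w.1 i).1) i
        · exact interleave_two_mul_add_one (fun i ↦ (w.1 i).1) i }

lemma isStatLeinert_iff_tendsto_closedWordFraction [DecidableEq G] {Y : Finset G}
    (hY : Y.Nonempty) :
    IsStatLeinert Y ↔
      Tendsto (closedWordFraction ValidAdj (pairValue (Y := Y)) ((#Y - 1) ^ 2)) atTop (𝓝 0) := by
  rw [IsStatLeinert, ← tendsto_add_atTop_iff_nat 1,
    ← tendsto_add_atTop_iff_nat (f := closedWordFraction _ _ _) 1]
  refine tendsto_congr fun n ↦ ?_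
  rw [closedWordFraction, badValidCount_eq_closedWordCount, card_offDiagPair, Fintype.card_coe,
    Nat.add_sub_cancel, show 2 * (n + 1) - 1 = 2 * n + 1 by omega]
  push_cast [Nat.cast_sub hY.card_pos]
  rw [pow_succ', pow_mul, mul_assoc]

theorem isStatLeinert_iff_infinite_closure {Y : Finset G} (hY : Y.Nontrivial) :
    IsStatLeinert Y ↔ Infinite (Subgroup.closure ((Y : Set G)⁻¹ * (Y : Set G))) := by
  classical
  have hcard : 2 ≤ #Y := one_lt_card_iff_nontrivial.2 hY
  have : Nontrivial Y := hY.coe_sort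
  have : Nonempty (OffDiagPair Y) := by
    obtain ⟨x, y, hxy⟩ := exists_pair_ne Y
    exact ⟨⟨(x, y), hxy⟩⟩
  have hR := isBiregular_validAdj (α := Y)
  rw [isStatLeinert_iff_tendsto_closedWordFraction hY.nonempty, ← closure_range_pairValue]
  rw [Fintype.card_coe] at hR
  obtain htwo | hthree := Nat.eq_or_lt_of_le hcard
  · rw [← htwo] at hR ⊢
    rw [hR.eq_of_reflexive fun p ↦ p.2.symm]
    refine tendsto_closedWordFraction_eq_iff_infinite
      (mem_zpowers_of_card_eq_two ?_ pairSwap_ne_self pairValue_pairSwap)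
    rw [card_offDiagPair, Fintype.card_coe, ← htwo]
  · refine tendsto_closedWordFraction_iff_infinite_of_mixing hR (validAdj_mixing ?_)
      fun p ↦ ⟨pairSwap p, pairValue_pairSwap p⟩
    rw [ENat.card_eq_coe_fintype_card, Fintype.card_coe]
    exact_mod_cast hthree

end ValidStrings

section Degenerate

variable {G : Type*} [Group G]

lemma isStatFree_empty : IsStatFree (∅ : Finset G) := by
  simp [IsStatFree]

lemma isStatLeinert_singleton (x : G) : IsStatLeinert ({x} : Finset G) := by
  have hexp (n : ℕ) : 2 * (n + 1) - 1 ≠ 0 := by omega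
  refine (tendsto_add_atTop_iff_nat 1).1 ?_
  simp [hexp]

end Degenerate

theorem statFree_iff_statLeinert_general {G : Type*} [Group G] [DecidableEq G]
    (X : Finset G) (hX : X ≠ {1}) :
    IsStatFree X ↔ IsStatLeinert (insert 1 X) := by
  obtain rfl | hne := X.eq_empty_or_nonempty
  · exact iff_of_true isStatFree_empty (isStatLeinert_singleton 1)
  · have hnontrivial : (insert 1 X).Nontrivial :=
      (nontrivial_iff_ne_singleton (mem_insert_self 1 X)).2 fun h ↦
        hX (hne.subset_singleton_iff.1 (h ▸ subset_insert 1 X))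
    rw [isStatFree_iff_infinite_closure hne, isStatLeinert_iff_infinite_closure hnontrivial,
      coe_insert, closure_inv_mul_of_one_mem (Set.mem_insert 1 _), Subgroup.closure_insert_one]

/-- Let `G` be a group with identity `e` and `X ⊆ G` finite with `e ∉ X`.
Then `X` is statistically free iff `X ∪ {e}` is statistically Leinert. -/
theorem statFree_iff_statLeinert {G : Type*} [Group G] [DecidableEq G]
    (X : Finset G) (he : (1 : G) ∉ X) :
    IsStatFree X ↔ IsStatLeinert (insert 1 X) :=
  statFree_iff_statLeinert_general X fun hX ↦ he (hX ▸ mem_singleton_self 1)
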